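/- Let R be a Noetherian ring and 𝔞 an ideal with dim R/𝔞 = 1. If f : M → N is a homomorphism of 𝔞-weakly cofinite R-modules, then ker f and coker f are 𝔞-weakly cofinite; thus the category of 𝔞-weakly cofinite R-modules is a full Abelian subcategory of the category of R-modules. -/

import Mathlib

open CategoryTheory

universe u

variable (R : Type u) [CommRing R]

/-- The `i`-th Ext module `Ext^i_R(N, M)` of `R`-modules. -/
noncomputable def extModule (i : ℕ) (N M : ModuleCat.{u} R) : ModuleCat.{u} R :=
  ((Ext R (ModuleCat.{u} R) i).obj (Opposite.op N)).obj M

/-- A module is weakly Laskerian if every quotient has finitely many associated primes. -/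
def IsWeaklyLaskerian (M : Type u) [AddCommGroup M] [Module R M] : Prop :=
  ∀ N : Submodule R M, (associatedPrimes R (M ⧸ N)).Finite

/-- `M` is `𝔞`-cofinite: `Supp M ⊆ V(𝔞)` and all `Ext^i_R(R/𝔞, M)` are finitely generated. -/
def IsCofinite (𝔞 : Ideal R) (M : ModuleCat.{u} R) : Prop :=
  Module.support R M ⊆ PrimeSpectrum.zeroLocus (𝔞 : Set R) ∧
    ∀ i : ℕ, Module.Finite R (extModule R i (ModuleCat.of R (R ⧸ 𝔞)) M)

/-- `M` is `𝔞`-weakly cofinite: `Supp M ⊆ V(𝔞)` and all `Ext^i_R(R/𝔞, M)` are weakly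
Laskerian. -/
def IsWeaklyCofinite (𝔞 : Ideal R) (M : ModuleCat.{u} R) : Prop :=
  Module.support R M ⊆ PrimeSpectrum.zeroLocus (𝔞 : Set R) ∧
    ∀ i : ℕ, IsWeaklyLaskerian R (extModule R i (ModuleCat.of R (R ⧸ 𝔞)) M)

/-- The Krull dimension of the support of a module. -/
noncomputable def suppDim (M : Type u) [AddCommGroup M] [Module R M] : WithBot ℕ∞ :=
  Order.krullDim (Module.support R M)

/-- The cohomological dimension `cd(𝔞, M) = sup {i | H^i_𝔞(M) ≠ 0}`, as an element of `ℕ∞`. -/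
noncomputable def cohomologicalDim (𝔞 : Ideal R) (M : ModuleCat.{u} R) : ℕ∞ :=
  ⨆ i ∈ {i : ℕ | Nontrivial ((localCohomology 𝔞 i).obj M)}, (i : ℕ∞)

/-- `p` is an attached prime of `M`: `p` is prime and is the annihilator of a quotient
of `M`. -/
def IsAttachedPrime (M : Type u) [AddCommGroup M] [Module R M] (p : Ideal R) : Prop :=
  p.IsPrime ∧ ∃ N : Submodule R M, p = Module.annihilator R (M ⧸ N)

/-
The modules `Ext^0(R/𝔞, B)` and `Ext^1(R/𝔞, B)` being weakly Laskerian already forces every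
`Ext^i(R/𝔞, B)` to be so, and the long exact sequences bound these two for `B = ker f`.

Only finitely many primes `q ⊇ 𝔞` have `V(q)` infinite, and they are minimal over `𝔞`. A submodule
of `B` that vanishes after inverting the complement `S` of their union has finite support, hence is
harmless, while `S⁻¹B` is Artinian since `(0 :_B 𝔞)` has finite rank at each such `q`. Secondary
representation of `S⁻¹B` gives `x ∈ 𝔞` and `n` with `𝔞 ^ n B ⊆ x B` after inverting `S`. Then
`B/xB` is, up to finite support, killed by `𝔞 ^ n`, so all its `Ext^i` are controlled by `Ext^0`;
the kernel of `x` on `B` is treated by induction on its image in `S⁻¹B`; and since `x` kills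
`Ext^i(R/𝔞, B)`, kernel and cokernel together control `B`.
-/

section Artinian

variable {A L : Type*} [CommRing A] [AddCommGroup L] [Module A L]

theorem exists_forall_ge_eq_of_antitone_antitone {α : Type*} [PartialOrder α] [WellFoundedLT α]
    {f : ℕ → ℕ → α} (hleft : ∀ j, Antitone fun i ↦ f i j) (hright : ∀ i, Antitone (f i)) :
    ∃ n, ∀ m ≥ n, ∀ j, f m j = f n j := by
  obtain ⟨d, hd⟩ := WellFoundedLT.antitone_chain_condition (f := fun i ↦ f i i)
    fun i j hij ↦ (hleft j hij).trans (hright i hij)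
  choose c hc using fun j ↦ WellFoundedLT.antitone_chain_condition (hleft j)
  have hdn : d ≤ max d ((Finset.range d).sup c) := le_max_left _ _
  refine ⟨max d ((Finset.range d).sup c), fun m hm j ↦ le_antisymm (hleft j hm) ?_⟩
  rcases lt_or_ge j d with hj | hj
  · have hcj : c j ≤ max d ((Finset.range d).sup c) :=
      (Finset.le_sup (Finset.mem_range.mpr hj)).trans (le_max_right _ _)
    exact ((hc j _ hcj).symm.trans (hc j m (hcj.trans hm))).le
  · calc f (max d ((Finset.range d).sup c)) j
        ≤ f d d := (hleft j hdn).trans (hright d hj)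
      _ = f (max m j) (max m j) := hd _ (hj.trans (le_max_right _ _))
      _ ≤ f m j := (hleft _ (le_max_left _ _)).trans (hright m (le_max_right _ _))

theorem le_of_pow_smul_mem_map {x : A} (hx : ∀ l : L, ∃ n : ℕ, x ^ n • l = 0)
    {N P : Submodule A L} (hPN : P ≤ N)
    (h : ∀ n : ℕ, ∀ l ∈ N, x ^ (n + 1) • l = 0 → ∃ l' ∈ P, x ^ n • l' = x ^ n • l) : N ≤ P := by
  intro l hl
  obtain ⟨n, hn⟩ := hx l
  induction n generalizing l with
  | zero =>
    rw [pow_zero, one_smul] at hn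
    exact hn ▸ P.zero_mem
  | succ n ih =>
    obtain ⟨l', hl', heq⟩ := h n l hl hn
    have hsub : l - l' ∈ P := ih (N.sub_mem hl (hPN hl')) (by rw [smul_sub, heq, sub_self])
    simpa only [sub_add_cancel] using P.add_mem hsub hl'

-- A descending chain `N` is controlled by the submodules `x ^ j N i ∩ ker x` of `ker x`, which
-- descend in both `i` and `j`.
theorem isArtinian_of_isArtinian_torsionBy {x : A} (hx : ∀ l : L, ∃ n : ℕ, x ^ n • l = 0)
    [IsArtinian A (Submodule.torsionBy A L x)] : IsArtinian A L := by
  rw [← monotone_stabilizes_iff_artinian]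
  intro N
  let G (i j : ℕ) : Submodule A (Submodule.torsionBy A L x) :=
    ((N i).ofDual.map (LinearMap.lsmul A L (x ^ j))).comap (Submodule.torsionBy A L x).subtype
  have hleft (j : ℕ) : Antitone fun i ↦ G i j := fun _ _ hij ↦
    Submodule.comap_mono (Submodule.map_mono (N.monotone hij))
  have hright (i : ℕ) : Antitone (G i) := by
    rintro j k hjk t ⟨l, hl, ht⟩
    refine ⟨x ^ (k - j) • l, (N i).ofDual.smul_mem _ hl, ?_⟩
    rwa [LinearMap.lsmul_apply, smul_smul, ← pow_add, Nat.add_sub_cancel' hjk]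
  obtain ⟨n, hn⟩ := exists_forall_ge_eq_of_antitone_antitone hleft hright
  refine ⟨n, fun m hm ↦ le_antisymm (N.monotone hm) ?_⟩
  refine le_of_pow_smul_mem_map hx (N.monotone hm) fun j l hl hjl ↦ ?_
  have hmem : (⟨x ^ j • l, by rwa [Submodule.mem_torsionBy_iff, smul_smul, ← pow_succ']⟩ :
      Submodule.torsionBy A L x) ∈ G n j := ⟨l, hl, rfl⟩
  rwa [← hn m hm j] at hmem

theorem isArtinian_of_isArtinian_torsionBySet_finset {s : Finset A}
    (hs : ∀ x ∈ s, ∀ l : L, ∃ n : ℕ, x ^ n • l = 0)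
    (h : IsArtinian A (Submodule.torsionBySet A L (s : Set A))) : IsArtinian A L := by
  classical
  induction s using Finset.induction_on with
  | empty =>
    have htop : Submodule.torsionBySet A L ((∅ : Finset A) : Set A) = ⊤ :=
      Submodule.eq_top_iff'.mpr fun l ↦ (Submodule.mem_torsionBySet_iff _ l).mpr (by simp)
    rw [htop] at h
    exact isArtinian_of_linearEquiv Submodule.topEquiv
  | insert x s _ ih =>
    let T := Submodule.torsionBySet A L (s : Set A)
    have hmem (t : Submodule.torsionBy A T x) :
        ((t : T) : L) ∈ Submodule.torsionBySet A L (insert x s : Finset A) := by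
      have hxt : x • (t : T) = 0 := t.2
      have hst := (Submodule.mem_torsionBySet_iff _ _).mp (t : T).2
      rw [Submodule.mem_torsionBySet_iff]
      rintro ⟨y, hy⟩
      rcases Finset.mem_insert.mp hy with rfl | hy
      · exact congrArg Subtype.val hxt
      · exact hst ⟨y, hy⟩
    have hker : IsArtinian A (Submodule.torsionBy A T x) :=
      isArtinian_of_injective ((T.subtype ∘ₗ Submodule.subtype _).codRestrict _ hmem)
        ((LinearMap.injective_codRestrict_iff hmem).mpr
          (Subtype.val_injective.comp Subtype.val_injective))
    have hT : IsArtinian A T := isArtinian_of_isArtinian_torsionBy (x := x) fun t ↦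
      (hs x (Finset.mem_insert_self x s) t).imp fun n hn ↦ Subtype.ext hn
    exact ih (fun y hy ↦ hs y (Finset.mem_insert_of_mem hy)) hT

theorem isArtinian_of_isArtinian_torsionBySet_of_fg {I : Ideal A} (hI : I.FG)
    (hL : ∀ x ∈ I, ∀ l : L, ∃ n : ℕ, x ^ n • l = 0)
    [IsArtinian A (Submodule.torsionBySet A L (I : Set A))] : IsArtinian A L := by
  obtain ⟨s, rfl⟩ := hI
  have hs : IsArtinian A (Submodule.torsionBySet A L (s : Set A)) := by
    rwa [Submodule.torsionBySet_eq_torsionBySet_span]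
  exact isArtinian_of_isArtinian_torsionBySet_finset
    (fun x hx ↦ hL x (Submodule.subset_span hx)) hs

theorem torsionBySet_mul_exact (I : Ideal A) {J : Ideal A} (hJ : J.FG) :
    ∃ (k : ℕ) (f : Submodule.torsionBySet A L (J : Set A) →ₗ[A]
        Submodule.torsionBySet A L ((I * J : Ideal A) : Set A))
      (g : Submodule.torsionBySet A L ((I * J : Ideal A) : Set A) →ₗ[A]
        (Fin k → Submodule.torsionBySet A L (I : Set A))),
      LinearMap.range f = LinearMap.ker g := by
  obtain ⟨k, y, hy⟩ := Submodule.fg_iff_exists_fin_generating_family.mp hJ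
  have hyJ (i : Fin k) : y i ∈ J := hy ▸ Submodule.subset_span ⟨i, rfl⟩
  have hmap (i : Fin k) : ∀ l ∈ Submodule.torsionBySet A L ((I * J : Ideal A) : Set A),
      LinearMap.lsmul A L (y i) l ∈ Submodule.torsionBySet A L (I : Set A) := by
    simp only [Submodule.mem_torsionBySet_iff, LinearMap.lsmul_apply, smul_smul]
    exact fun l hl a ↦ hl ⟨a * y i, Ideal.mul_mem_mul a.2 (hyJ i)⟩
  refine ⟨k, Submodule.inclusion (Submodule.torsionBySet_le_torsionBySet_of_subset
    (SetLike.coe_subset_coe.mpr Ideal.mul_le_right)),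
    LinearMap.pi fun i ↦ (LinearMap.lsmul A L (y i)).restrict (hmap i), ?_⟩
  have hker (l : L) : l ∈ Submodule.torsionBySet A L (J : Set A) ↔ ∀ i, y i • l = 0 := by
    have hJy : (J : Set A) = Ideal.span (Set.range y) := congrArg _ hy.symm
    rw [hJy, ← Submodule.torsionBySet_eq_torsionBySet_span,
      Submodule.mem_torsionBySet_iff, Set.forall_subtype_range_iff]
  ext l
  rw [Submodule.range_inclusion, Submodule.mem_comap, Submodule.subtype_apply, hker,
    LinearMap.mem_ker, funext_iff]
  simp only [LinearMap.pi_apply, Subtype.ext_iff, LinearMap.coe_restrict_apply,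
    LinearMap.lsmul_apply, Pi.zero_apply, ZeroMemClass.coe_zero]

theorem isArtinian_torsionBySet_mul (I : Ideal A) {J : Ideal A} (hJ : J.FG)
    [IsArtinian A (Submodule.torsionBySet A L (I : Set A))]
    [IsArtinian A (Submodule.torsionBySet A L (J : Set A))] :
    IsArtinian A (Submodule.torsionBySet A L ((I * J : Ideal A) : Set A)) := by
  obtain ⟨k, f, g, hfg⟩ := torsionBySet_mul_exact (L := L) I hJ
  exact isArtinian_of_range_eq_ker f g hfg

theorem isArtinian_torsionBySet_of_forall_isPrime [IsNoetherianRing A] (I : Ideal A)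
    (h : ∀ P : Ideal A, P.IsPrime → I ≤ P →
      IsArtinian A (Submodule.torsionBySet A L (P : Set A))) :
    IsArtinian A (Submodule.torsionBySet A L (I : Set A)) := by
  induction I using WellFoundedGT.induction with
  | ind I ih =>
  by_cases hI : I.IsPrime
  · exact h I hI le_rfl
  rcases Ideal.not_isPrime_iff.mp hI with rfl | ⟨a, ha, b, hb, hab⟩
  · rw [Submodule.top_coe, Submodule.torsionBySet_univ]
    infer_instance
  · have larger (c : A) (hc : c ∉ I) :
        IsArtinian A (Submodule.torsionBySet A L ((I ⊔ Ideal.span {c} : Ideal A) : Set A)) :=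
      ih _ (Submodule.lt_sup_iff_notMem.mpr hc) fun P hP hle ↦ h P hP (le_sup_left.trans hle)
    have hmul : (I ⊔ Ideal.span {a}) * (I ⊔ Ideal.span {b}) ≤ I := by
      rw [Ideal.sup_mul, Ideal.mul_sup (Ideal.span {a}), Ideal.span_singleton_mul_span_singleton]
      exact sup_le Ideal.mul_le_left
        (sup_le Ideal.mul_le_right ((Ideal.span_singleton_le_iff_mem I).mpr hab))
    have := larger a ha
    have := larger b hb
    have := isArtinian_torsionBySet_mul (L := L) (I ⊔ Ideal.span {a})
      (IsNoetherian.noetherian (I ⊔ Ideal.span {b}))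
    exact isArtinian_of_le (Submodule.torsionBySet_le_torsionBySet_of_subset hmul)

end Artinian

theorem exists_mem_forall_notMem_of_forall_not_le {A ι : Type*} [CommRing A] {s : Set ι}
    (hs : s.Finite) {P : ι → Ideal A} (hP : ∀ i ∈ s, (P i).IsPrime) {I : Ideal A}
    (hI : ∀ i ∈ s, ¬ I ≤ P i) : ∃ x ∈ I, ∀ i ∈ s, x ∉ P i := by
  rcases s.eq_empty_or_nonempty with rfl | ⟨i, -⟩
  · exact ⟨0, I.zero_mem, fun i hi ↦ hi.elim⟩
  by_contra! hcover
  obtain ⟨j, hj, hIj⟩ := (Ideal.subset_union_prime_finite hs i i fun j hj _ _ ↦ hP j hj).mp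
    fun x hx ↦ by simpa only [Set.mem_iUnion, exists_prop, SetLike.mem_coe] using hcover x hx
  exact hI j hj hIj

/-- A secondary module, the dual notion to a coprimary module: a nonzero module on which every
scalar acts either surjectively or nilpotently. -/
def IsSecondary (A L : Type*) [CommRing A] [AddCommGroup L] [Module A L] : Prop :=
  Nontrivial L ∧ ∀ r : A, Function.Surjective (LinearMap.lsmul A L r) ∨
    r ∈ (Module.annihilator A L).radical

section Secondary

variable {A L : Type*} [CommRing A] [AddCommGroup L] [Module A L]

theorem lsmul_pow (r : A) (n : ℕ) : LinearMap.lsmul A L r ^ n = LinearMap.lsmul A L (r ^ n) :=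
  (map_pow (algebraMap A (Module.End A L)) r n).symm

theorem isSecondary_of_supIrred {D : Submodule A L} [IsArtinian A D] (hD : SupIrred D) :
    IsSecondary A D := by
  refine ⟨Submodule.nontrivial_iff_ne_bot.mpr fun h ↦ hD.1 (h ▸ isMin_bot), fun r ↦ ?_⟩
  obtain ⟨n, hfitting, hn⟩ := ((LinearMap.lsmul A D r).eventually_codisjoint_ker_pow_range_pow.and
    (Filter.eventually_ge_atTop 1)).exists
  have htop (N : Submodule A D) (hN : N.map D.subtype = D) : N = ⊤ :=
    Submodule.map_injective_of_injective D.injective_subtype (by rw [hN, D.map_subtype_top])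
  have hsup : (LinearMap.ker (LinearMap.lsmul A D r ^ n)).map D.subtype ⊔
      (LinearMap.range (LinearMap.lsmul A D r ^ n)).map D.subtype = D := by
    rw [← Submodule.map_sup, hfitting.eq_top, D.map_subtype_top]
  rcases hD.2 hsup with hker | hrange
  · right
    refine ⟨n, Module.mem_annihilator.mpr fun d ↦ ?_⟩
    have hd : d ∈ LinearMap.ker (LinearMap.lsmul A D r ^ n) := htop _ hker ▸ Submodule.mem_top
    rwa [lsmul_pow] at hd
  · left
    have hsurj := LinearMap.range_eq_top.mp (htop _ hrange)
    rw [← Nat.sub_add_cancel hn, pow_succ', Module.End.mul_eq_comp, LinearMap.coe_comp] at hsurj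
    exact hsurj.of_comp

theorem IsSecondary.surjective_of_notMem_radical (hL : IsSecondary A L) {r : A}
    (hr : r ∉ (Module.annihilator A L).radical) :
    Function.Surjective (LinearMap.lsmul A L r) :=
  (hL.2 r).resolve_right hr

theorem IsSecondary.isPrime_radical_annihilator (hL : IsSecondary A L) :
    (Module.annihilator A L).radical.IsPrime := by
  refine ⟨fun h ↦ ?_, fun {r s} hrs ↦ or_iff_not_imp_left.mpr fun hr ↦ ?_⟩
  · have := hL.1
    rw [Ideal.radical_eq_top, Module.annihilator_eq_top_iff] at h
    exact not_subsingleton L h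
  · obtain ⟨n, hn⟩ := hrs
    refine ⟨n, Module.mem_annihilator.mpr fun l ↦ ?_⟩
    have hpow : Function.Surjective (LinearMap.lsmul A L r ^ n) := by
      rw [Module.End.coe_pow]
      exact (hL.surjective_of_notMem_radical hr).iterate n
    obtain ⟨l', rfl⟩ := hpow l
    rw [lsmul_pow, LinearMap.lsmul_apply, smul_smul, ← mul_pow, mul_comm]
    exact Module.mem_annihilator.mp hn l'

theorem IsSecondary.exists_pow_smul_top_le_range (hL : IsSecondary A L) {I : Ideal A} (hI : I.FG)
    {x : A} (hx : ¬ I ≤ (Module.annihilator A L).radical →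
      x ∉ (Module.annihilator A L).radical) :
    ∃ n : ℕ, I ^ n • (⊤ : Submodule A L) ≤ LinearMap.range (LinearMap.lsmul A L x) := by
  by_cases h : I ≤ (Module.annihilator A L).radical
  · obtain ⟨n, hn⟩ := Ideal.exists_pow_le_of_le_radical_of_fg h hI
    refine ⟨n, Submodule.smul_le.mpr fun a ha l _ ↦ ?_⟩
    rw [Module.mem_annihilator.mp (hn ha) l]
    exact Submodule.zero_mem _
  · refine ⟨0, le_top.trans (LinearMap.range_eq_top.mpr ?_).ge⟩
    exact hL.surjective_of_notMem_radical (hx h)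

theorem exists_mem_exists_pow_smul_top_le_range [IsArtinian A L] {I : Ideal A} (hI : I.FG) :
    ∃ x ∈ I, ∃ n : ℕ,
      I ^ n • (⊤ : Submodule A L) ≤ LinearMap.range (LinearMap.lsmul A L x) := by
  obtain ⟨s, hs, hirr⟩ := exists_supIrred_decomposition (⊤ : Submodule A L)
  have hsec {D : Submodule A L} (hD : D ∈ s) : IsSecondary A D := isSecondary_of_supIrred (hirr hD)
  obtain ⟨x, hxI, hx⟩ := exists_mem_forall_notMem_of_forall_not_le
    (s := {D ∈ (s : Set (Submodule A L)) | ¬ I ≤ D.annihilator.radical})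
    (s.finite_toSet.subset (Set.sep_subset _ _))
    (fun D hD ↦ (hsec hD.1).isPrime_radical_annihilator) fun D hD ↦ hD.2
  choose! n hn using fun D (hD : D ∈ s) ↦
    (hsec hD).exists_pow_smul_top_le_range hI fun h ↦ hx D ⟨hD, h⟩
  refine ⟨x, hxI, s.sup n, ?_⟩
  rw [← hs, Finset.sup_eq_iSup, Submodule.smul_iSup]
  refine iSup_le fun D ↦ ?_
  rw [Submodule.smul_iSup]
  refine iSup_le fun hD ↦ Submodule.smul_le.mpr fun a ha d hd ↦ ?_
  obtain ⟨d', hd'⟩ := hn D hD (Submodule.smul_mem_smul (Ideal.pow_le_pow_right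
    (Finset.le_sup hD) ha) (Submodule.mem_top (x := (⟨d, hd⟩ : D))))
  exact ⟨d', congrArg Subtype.val hd'⟩

end Secondary

theorem mk_mem_support_of_mem_associatedPrimes {R M : Type*} [CommRing R] [AddCommGroup M]
    [Module R M] {p : Ideal R} (hp : p ∈ associatedPrimes R M) :
    (⟨p, hp.isPrime⟩ : PrimeSpectrum R) ∈ Module.support R M := by
  obtain ⟨x, rfl⟩ := hp.eq_radical_colon
  refine Module.mem_support_iff_exists_annihilator.mpr ⟨x, fun r hr ↦ Ideal.le_radical ?_⟩
  rwa [Submodule.mem_annihilator_span_singleton, ← Submodule.mem_bot R,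
    ← Submodule.mem_colon_singleton] at hr

namespace IsWeaklyLaskerian

variable {R} {A B C : Type u} [AddCommGroup A] [Module R A] [AddCommGroup B] [Module R B]
  [AddCommGroup C] [Module R C]

theorem finite_associatedPrimes (hA : IsWeaklyLaskerian R A) : (associatedPrimes R A).Finite :=
  LinearEquiv.AssociatedPrimes.eq (Submodule.quotEquivOfEqBot (⊥ : Submodule R A) rfl) ▸ hA ⊥

theorem of_exact {f : A →ₗ[R] B} {g : B →ₗ[R] C} (hfg : Function.Exact f g)
    (hA : IsWeaklyLaskerian R A) (hC : IsWeaklyLaskerian R C) : IsWeaklyLaskerian R B := by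
  intro N
  let f' : (A ⧸ N.comap f) →ₗ[R] B ⧸ N := (N.comap f).mapQ N f le_rfl
  let g' : (B ⧸ N) →ₗ[R] C ⧸ (N.map g) := N.mapQ (N.map g) g (N.le_comap_map g)
  have hf' : Function.Injective f' := by
    rw [← LinearMap.ker_eq_bot, Submodule.ker_mapQ, Submodule.mkQ_map_self]
  have hfg' : Function.Exact f' g' := by
    rw [LinearMap.exact_iff, Submodule.ker_mapQ, Submodule.range_mapQ, Submodule.comap_map_eq,
      hfg.linearMap_ker_eq, Submodule.map_sup, Submodule.mkQ_map_self, bot_sup_eq]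
  exact ((hA _).union (hC _)).subset (associatedPrimes.subset_union_of_exact hf' hfg')

theorem of_subsingleton [Subsingleton A] : IsWeaklyLaskerian R A := fun N ↦ by
  rw [associatedPrimes.eq_empty_of_subsingleton]
  exact Set.finite_empty

theorem of_injective {g : B →ₗ[R] C} (hg : Function.Injective g) (hC : IsWeaklyLaskerian R C) :
    IsWeaklyLaskerian R B :=
  of_exact (LinearMap.exact_zero_iff_injective PUnit.{u + 1} g |>.mpr hg) of_subsingleton hC

theorem of_surjective {f : A →ₗ[R] B} (hf : Function.Surjective f) (hA : IsWeaklyLaskerian R A) :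
    IsWeaklyLaskerian R B :=
  of_exact (LinearMap.exact_zero_iff_surjective PUnit.{u + 1} f |>.mpr hf) hA of_subsingleton

theorem of_ker_le_range {f : A →ₗ[R] B} {g : B →ₗ[R] C}
    (hfg : LinearMap.ker g ≤ LinearMap.range f) (hA : IsWeaklyLaskerian R A)
    (hC : IsWeaklyLaskerian R C) : IsWeaklyLaskerian R B := by
  let π := ((LinearMap.range f).map g).mkQ
  refine of_exact (f := f) (g := π ∘ₗ g) ?_ hA (hC.of_surjective (Submodule.mkQ_surjective _))
  rw [LinearMap.exact_iff, LinearMap.ker_comp, Submodule.ker_mkQ, Submodule.comap_map_eq,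
    sup_eq_left.mpr hfg]

theorem congr (e : A ≃ₗ[R] B) : IsWeaklyLaskerian R A ↔ IsWeaklyLaskerian R B :=
  ⟨of_surjective (f := e.toLinearMap) e.surjective, of_injective (g := e.toLinearMap) e.injective⟩

theorem pi_fin (hA : IsWeaklyLaskerian R A) (n : ℕ) : IsWeaklyLaskerian R (Fin n → A) := by
  induction n with
  | zero => exact of_subsingleton
  | succ n ih =>
    have hexact : Function.Exact (LinearMap.single R (fun _ : Fin (n + 1) ↦ A) 0)
        (LinearMap.funLeft R A Fin.succ) := by
      refine fun v ↦ ⟨fun hv ↦ ⟨v 0, ?_⟩, ?_⟩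
      · ext i
        refine Fin.cases ?_ (fun j ↦ ?_) i
        · exact Pi.single_eq_same (M := fun _ ↦ A) 0 (v 0)
        · exact (Pi.single_eq_of_ne (M := fun _ ↦ A) (Fin.succ_ne_zero j) (v 0)).trans
            (congrFun hv j).symm
      · rintro ⟨a, rfl⟩
        exact funext fun j ↦ Pi.single_eq_of_ne (M := fun _ ↦ A) (Fin.succ_ne_zero j) a
    exact of_exact hexact hA ih

theorem of_finite_support (h : (Module.support R A).Finite) : IsWeaklyLaskerian R A :=
  fun N ↦ (h.image PrimeSpectrum.asIdeal).subset fun _ hp ↦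
    ⟨_, Module.support_subset_of_surjective N.mkQ N.mkQ_surjective
      (mk_mem_support_of_mem_associatedPrimes hp), rfl⟩

end IsWeaklyLaskerian

theorem not_isWeaklyLaskerian_finsupp_quotient {R : Type u} [CommRing R] [IsNoetherianRing R]
    {q : Ideal R} (hq : (PrimeSpectrum.zeroLocus (q : Set R)).Infinite) :
    ¬ IsWeaklyLaskerian R (ℕ →₀ R ⧸ q) := by
  classical
  intro hwl
  let p := hq.natEmbedding
  have hsum : IsWeaklyLaskerian R (Π₀ i, R ⧸ (p i).1.asIdeal) :=
    ((IsWeaklyLaskerian.congr (finsuppLequivDFinsupp R)).mp hwl).of_surjective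
      (f := DFinsupp.mapRange.linearMap fun i ↦ Submodule.factor (p i).2)
      ((DFinsupp.mapRange_surjective _ fun _ ↦ map_zero _).mpr fun i ↦
        Submodule.factor_surjective (p i).2)
  have hass (i : ℕ) : (p i).1.asIdeal ∈ associatedPrimes R (Π₀ i, R ⧸ (p i).1.asIdeal) :=
    (isAssociatedPrime_iff_exists_injective_linearMap _ _).mpr
      ⟨(p i).1.2, DFinsupp.lsingle (M := fun j ↦ R ⧸ (p j).1.asIdeal) i,
        DFinsupp.single_injective (β := fun j ↦ R ⧸ (p j).1.asIdeal)⟩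
  exact Set.infinite_range_of_injective (fun i j hij ↦ p.injective (Subtype.ext
    (PrimeSpectrum.ext hij))) (hsum.finite_associatedPrimes.subset (Set.range_subset_iff.mpr hass))

/-- `Ext^i_R(N, M)` for bare modules, as the morphisms `N ⟶ M[i]` of the derived category, which
carry the long exact sequences; `nonempty_extModule_linearEquiv` relates it to `extModule`. -/
abbrev DerivedExt (N M : Type u) [AddCommGroup N] [Module R N] [AddCommGroup M] [Module R M]
    (i : ℕ) : Type u :=
  Abelian.Ext.{u} (ModuleCat.of R N) (ModuleCat.of R M) i

/-- Evaluation at `1` identifies `Hom_R(R/I, M)` with the submodule `(0 :_M I)`. -/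
def quotientLinearMapEquivTorsionBySet {R M : Type*} [CommRing R] [AddCommGroup M] [Module R M]
    (I : Ideal R) : ((R ⧸ I) →ₗ[R] M) ≃ₗ[R] Submodule.torsionBySet R M (I : Set R) where
  toFun f := ⟨f (I.mkQ 1), (Submodule.mem_torsionBySet_iff _ _).mpr fun a ↦ by
    rw [← map_smul, ← map_smul, smul_eq_mul, mul_one, Submodule.mkQ_apply,
      (Submodule.Quotient.mk_eq_zero I).mpr a.2, map_zero]⟩
  map_add' _ _ := rfl
  map_smul' _ _ := rfl
  invFun m := I.liftQ (LinearMap.toSpanSingleton R M m) fun a ha ↦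
    (Submodule.mem_torsionBySet_iff _ _).mp m.2 ⟨a, ha⟩
  left_inv f := Submodule.linearMap_qext _ <| LinearMap.ext_ring <| one_smul R (f (I.mkQ 1))
  right_inv m := Subtype.ext (one_smul R (m : M))

section DerivedExt

variable {R} {A B C : Type u} [AddCommGroup A] [Module R A] [AddCommGroup B] [Module R B]
  [AddCommGroup C] [Module R C] (N : Type u) [AddCommGroup N] [Module R N]

/-- The map `Ext^i_R(N, f) : Ext^i_R(N, A) → Ext^i_R(N, B)` induced by `f : A → B`. -/
noncomputable def extMap (f : A →ₗ[R] B) (i : ℕ) : DerivedExt R N A i →ₗ[R] DerivedExt R N B i :=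
  (Abelian.Ext.mk₀ (ModuleCat.ofHom f)).postcompOfLinear R _ (add_zero i)

theorem extMap_zero_injective {f : A →ₗ[R] B} (hf : Function.Injective f) :
    Function.Injective (extMap N f 0) := by
  have : Mono (ModuleCat.ofHom f) := (ModuleCat.mono_iff_injective _).mpr hf
  exact Abelian.Ext.postcomp_mk₀_injective_of_mono _ (ModuleCat.ofHom f)

theorem extMap_comp (f : A →ₗ[R] B) (g : B →ₗ[R] C) (i : ℕ) :
    extMap N (g ∘ₗ f) i = extMap N g i ∘ₗ extMap N f i := by
  refine LinearMap.ext fun y ↦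
    .trans ?_ (Abelian.Ext.comp_assoc_of_third_deg_zero y _ _ (add_zero i)).symm
  rw [Abelian.Ext.mk₀_comp_mk₀]
  rfl

theorem extMap_id (i : ℕ) : extMap N (LinearMap.id : B →ₗ[R] B) i = LinearMap.id :=
  LinearMap.ext Abelian.Ext.comp_mk₀_id

theorem extMap_lsmul (x : R) (i : ℕ) :
    extMap N (LinearMap.lsmul R B x) i = LinearMap.lsmul R (DerivedExt R N B i) x :=
  LinearMap.ext fun y ↦ (Abelian.Ext.smul_eq_comp_mk₀ y x).symm

theorem smul_derivedExt_eq_zero {x : R} (hx : x ∈ Module.annihilator R N) {i : ℕ}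
    (y : DerivedExt R N B i) : x • y = 0 := by
  have hid : x • 𝟙 (ModuleCat.of R N) = 0 := by
    ext n
    exact Module.mem_annihilator.mp hx n
  rw [← y.mk₀_id_comp, ← Abelian.Ext.smul_comp, ← Abelian.Ext.mk₀_smul, hid,
    Abelian.Ext.mk₀_zero, Abelian.Ext.zero_comp]

/-- `Ext^0_R(R/I, M)` is the submodule `(0 :_M I)`. -/
noncomputable def derivedExtZeroQuotientEquiv (I : Ideal R) :
    DerivedExt R (R ⧸ I) B 0 ≃ₗ[R] Submodule.torsionBySet R B (I : Set R) :=
  (Abelian.Ext.linearEquiv₀.trans ModuleCat.homLinearEquiv).trans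
    (quotientLinearMapEquivTorsionBySet I)

theorem shortExact_shortComplexOfCompEqZero {f : A →ₗ[R] B} {g : B →ₗ[R] C}
    (hf : Function.Injective f) (hfg : Function.Exact f g) (hg : Function.Surjective g) :
    (ModuleCat.shortComplexOfCompEqZero f g hfg.linearMap_comp_eq_zero).ShortExact :=
  ModuleCat.shortComplex_shortExact _ hfg hf hg

theorem exact_rangeRestrict {R A B C : Type*} [Ring R] [AddCommGroup A] [Module R A]
    [AddCommGroup B] [Module R B] [AddCommGroup C] [Module R C] {f : A →ₗ[R] B} {g : B →ₗ[R] C}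
    (hfg : Function.Exact f g) : Function.Exact f g.rangeRestrict :=
  (Function.Injective.comp_exact_iff_exact (LinearMap.range g).injective_subtype).mp hfg

end DerivedExt

namespace IsWeaklyLaskerian

variable {R} {A B C : Type u} [AddCommGroup A] [Module R A] [AddCommGroup B] [Module R B]
  [AddCommGroup C] [Module R C] {N : Type u} [AddCommGroup N] [Module R N]

theorem derivedExt_of_linearEquiv (e : A ≃ₗ[R] B) {i : ℕ}
    (hA : IsWeaklyLaskerian R (DerivedExt R N A i)) : IsWeaklyLaskerian R (DerivedExt R N B i) := by
  have hcomp : extMap N e.toLinearMap i ∘ₗ extMap N e.symm.toLinearMap i = LinearMap.id := by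
    rw [← extMap_comp, LinearEquiv.comp_symm, extMap_id]
  exact hA.of_surjective (f := extMap N e.toLinearMap i)
    (Function.RightInverse.surjective (LinearMap.congr_fun hcomp))

section LongExactSequence

variable {f : A →ₗ[R] B} {g : B →ₗ[R] C} (hf : Function.Injective f) (hfg : Function.Exact f g)
  (hg : Function.Surjective g)

include hf hfg hg

theorem derivedExt_middle {i : ℕ} (hA : IsWeaklyLaskerian R (DerivedExt R N A i))
    (hC : IsWeaklyLaskerian R (DerivedExt R N C i)) :
    IsWeaklyLaskerian R (DerivedExt R N B i) :=
  of_ker_le_range (f := extMap N f i) (g := extMap N g i) (fun y hy ↦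
    Abelian.Ext.covariant_sequence_exact₂ _ (shortExact_shortComplexOfCompEqZero hf hfg hg) y hy)
    hA hC

theorem derivedExt_right {i : ℕ} (hB : IsWeaklyLaskerian R (DerivedExt R N B i))
    (hA : IsWeaklyLaskerian R (DerivedExt R N A (i + 1))) :
    IsWeaklyLaskerian R (DerivedExt R N C i) :=
  have hS := shortExact_shortComplexOfCompEqZero hf hfg hg
  of_ker_le_range (f := extMap N g i) (g := hS.extClass.postcompOfLinear R _ rfl)
    (fun y hy ↦ Abelian.Ext.covariant_sequence_exact₃ _ hS y rfl hy) hB hA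

theorem ker_extMap {i : ℕ} (hC : ∀ j, j + 1 = i → IsWeaklyLaskerian R (DerivedExt R N C j)) :
    IsWeaklyLaskerian R (LinearMap.ker (extMap N f i)) := by
  cases i with
  | zero =>
    rw [LinearMap.ker_eq_bot.mpr (extMap_zero_injective N hf)]
    exact of_subsingleton
  | succ j =>
    have hS := shortExact_shortComplexOfCompEqZero hf hfg hg
    let δ : DerivedExt R N C j →ₗ[R] DerivedExt R N A (j + 1) :=
      hS.extClass.postcompOfLinear R _ rfl
    have hker : LinearMap.ker (extMap N f (j + 1)) ≤ LinearMap.range δ := fun y hy ↦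
      Abelian.Ext.covariant_sequence_exact₁ _ hS y hy rfl
    exact ((hC j rfl).of_surjective δ.surjective_rangeRestrict).of_injective
      (Submodule.inclusion_injective hker)

theorem derivedExt_left {i : ℕ} (hC : IsWeaklyLaskerian R (DerivedExt R N C i))
    (hB : IsWeaklyLaskerian R (DerivedExt R N B (i + 1))) :
    IsWeaklyLaskerian R (DerivedExt R N A (i + 1)) :=
  of_exact (LinearMap.exact_subtype_ker_map (extMap N f (i + 1)))
    (ker_extMap hf hfg hg fun _ hj ↦ Nat.succ.inj hj ▸ hC) hB

end LongExactSequence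

section KernelCokernel

variable {f : A →ₗ[R] B} {g : B →ₗ[R] C} (hf : Function.Injective f) (hfg : Function.Exact f g)

include hf hfg

theorem derivedExt_zero_one_of_exact (hB₀ : IsWeaklyLaskerian R (DerivedExt R N B 0))
    (hB₁ : IsWeaklyLaskerian R (DerivedExt R N B 1))
    (hC₀ : IsWeaklyLaskerian R (DerivedExt R N C 0)) :
    IsWeaklyLaskerian R (DerivedExt R N A 0) ∧ IsWeaklyLaskerian R (DerivedExt R N A 1) :=
  have hrange : IsWeaklyLaskerian R (DerivedExt R N (LinearMap.range g) 0) :=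
    hC₀.of_injective (extMap_zero_injective N (LinearMap.range g).injective_subtype)
  ⟨hB₀.of_injective (extMap_zero_injective N hf),
    derivedExt_left hf (exact_rangeRestrict hfg) g.surjective_rangeRestrict hrange hB₁⟩

theorem derivedExt_quotient_range_of_exact {i : ℕ}
    (hA : IsWeaklyLaskerian R (DerivedExt R N A (i + 2)))
    (hB : IsWeaklyLaskerian R (DerivedExt R N B (i + 1)))
    (hC : IsWeaklyLaskerian R (DerivedExt R N C i)) :
    IsWeaklyLaskerian R (DerivedExt R N (C ⧸ LinearMap.range g) i) :=
  have hrange : IsWeaklyLaskerian R (DerivedExt R N (LinearMap.range g) (i + 1)) :=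
    derivedExt_right hf (exact_rangeRestrict hfg) g.surjective_rangeRestrict hB hA
  derivedExt_right (LinearMap.range g).injective_subtype (LinearMap.exact_subtype_mkQ _)
    (Submodule.mkQ_surjective _) hC hrange

end KernelCokernel

-- Melkersson: multiplication by `x` is zero on `Ext(N, B)` and factors through `Ext(N, xB)`.
theorem derivedExt_of_exact_lsmul {x : R} (hx : x ∈ Module.annihilator R N) {f : A →ₗ[R] B}
    (hf : Function.Injective f) (hfx : Function.Exact f (LinearMap.lsmul R B x))
    (hA : ∀ i, IsWeaklyLaskerian R (DerivedExt R N A i))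
    (hquot : ∀ i,
      IsWeaklyLaskerian R (DerivedExt R N (B ⧸ LinearMap.range (LinearMap.lsmul R B x)) i))
    (i : ℕ) : IsWeaklyLaskerian R (DerivedExt R N B i) := by
  let μ := LinearMap.lsmul R B x
  let π := extMap N μ.rangeRestrict i
  let ι := extMap N (LinearMap.range μ).subtype i
  have hιπ (y : DerivedExt R N B i) : π y ∈ LinearMap.ker ι := by
    have hcomp : ι ∘ₗ π = LinearMap.lsmul R _ x := by
      rw [← extMap_comp, LinearMap.subtype_comp_codRestrict, extMap_lsmul]
    exact (LinearMap.congr_fun hcomp y).trans (smul_derivedExt_eq_zero N hx y)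
  have hι : IsWeaklyLaskerian R (LinearMap.ker ι) :=
    ker_extMap (LinearMap.range μ).injective_subtype (LinearMap.exact_subtype_mkQ _)
      (Submodule.mkQ_surjective _) fun j _ ↦ hquot j
  have hS := shortExact_shortComplexOfCompEqZero hf (exact_rangeRestrict (g := μ) hfx)
    μ.surjective_rangeRestrict
  exact of_ker_le_range (f := extMap N f i) (g := π.codRestrict _ hιπ) (fun y hy ↦
    Abelian.Ext.covariant_sequence_exact₂ _ hS y (congrArg Subtype.val hy)) (hA i) hι

theorem linearMap (hB : IsWeaklyLaskerian R B) [Module.Finite R N] :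
    IsWeaklyLaskerian R (N →ₗ[R] B) := by
  obtain ⟨n, π, hπ⟩ := Module.Finite.exists_fin' R N
  have hpi : IsWeaklyLaskerian R ((Fin n → R) →ₗ[R] B) :=
    (congr ((Pi.basisFun R (Fin n)).constr R)).mp (hB.pi_fin n)
  exact hpi.of_injective (g := LinearMap.lcomp R B π) (LinearMap.lcomp_injective_of_surjective π hπ)

theorem derivedExt [IsNoetherianRing R] (hB : IsWeaklyLaskerian R B) (N : Type u) [AddCommGroup N]
    [Module R N] [Module.Finite R N] (i : ℕ) : IsWeaklyLaskerian R (DerivedExt R N B i) := by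
  induction i generalizing N with
  | zero => exact (congr (Abelian.Ext.linearEquiv₀.trans ModuleCat.homLinearEquiv)).mpr hB.linearMap
  | succ n ih =>
    obtain ⟨P, _, _, _, _, π, hπ⟩ := Module.exists_finite_presentation R N
    have hS := LinearMap.shortExact_shortComplexKer hπ
    exact (ih (LinearMap.ker π)).of_surjective
      (f := hS.extClass.precompOfLinear R (ModuleCat.of R B) (add_comm 1 n))
      (precomp_extClass_surjective_of_projective_X₂ (ModuleCat.of R B) hS n)

end IsWeaklyLaskerian

section Comparison

open CochainComplex.HomComplex

variable {R} {X Y : ModuleCat.{u} R} (P : ProjectiveResolution X)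

theorem extMk_eq_zero_iff_eq_zero {f : P.complex.X 0 ⟶ Y} (hf : P.complex.d 1 0 ≫ f = 0) :
    P.extMk f 1 rfl hf = 0 ↔ f = 0 := by
  refine ⟨fun h ↦ ?_, fun h ↦ by subst h; exact P.extMk_zero 1 rfl⟩
  rw [← P.extEquivCohomologyClass.apply_eq_iff_eq, P.extEquivCohomologyClass_extMk,
    P.extEquivCohomologyClass_zero, CohomologyClass.mk_eq_zero_iff] at h
  obtain ⟨g, hg⟩ := (Cocycle.toSingleMk_mem_coboundaries_iff _ _ _ _ _ 1 (by simp)).mp h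
  have hg0 : g = 0 :=
    (CochainComplex.isZero_of_isStrictlyLE P.cochainComplex 0 1 (by norm_num)).eq_of_src _ _
  rw [hg0, Limits.comp_zero] at hg
  exact (cancel_epi (P.cochainComplexXIso (-(0 : ℕ)) 0 rfl).hom).mp
    (hg.symm.trans Limits.comp_zero.symm)

theorem extMk_eq_zero_iff_exists_d_comp {n : ℕ} {f : P.complex.X n ⟶ Y}
    (hf : P.complex.d (n + 1) n ≫ f = 0) :
    P.extMk f (n + 1) rfl hf = 0 ↔
      ∃ g : P.complex.X ((ComplexShape.up ℕ).prev n) ⟶ Y, P.complex.d n _ ≫ g = f := by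
  cases n with
  | zero =>
    rw [extMk_eq_zero_iff_eq_zero, P.complex.shape 0 _ (by simp)]
    simp only [Limits.zero_comp, exists_const, eq_comm]
  | succ n => exact P.extMk_eq_zero_iff f _ rfl hf _ (by simp)

theorem smul_extMk {n : ℕ} (r : R) (f : P.complex.X n ⟶ Y)
    (hf : P.complex.d (n + 1) n ≫ f = 0) :
    r • P.extMk f (n + 1) rfl hf =
      P.extMk (r • f) (n + 1) rfl (by rw [Linear.comp_smul, hf, smul_zero]) := by
  rw [Abelian.Ext.smul_eq_comp_mk₀, ProjectiveResolution.extMk_comp_mk₀]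
  simp only [Linear.comp_smul, Category.comp_id]

variable (Y) in
/-- The degree `n` part `Hom(P_{n-1}, Y) → Hom(P_n, Y) → Hom(P_{n+1}, Y)` of the cochain complex
of homomorphisms from the projective resolution `P` to `Y`. -/
noncomputable abbrev homShortComplex (n : ℕ) : ShortComplex (ModuleCat.{u} R) :=
  (P.complex.linearYonedaObj R Y).sc' ((ComplexShape.up ℕ).prev n) n (n + 1)

variable (Y) in
/-- The class in `Ext^n(X, Y)` of an `n`-cocycle of `Hom(P, Y)`. -/
noncomputable def cocycleToExt (n : ℕ) :
    LinearMap.ker (homShortComplex Y P n).g.hom →ₗ[R] Abelian.Ext.{u} X Y n where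
  toFun f := P.extMk (n := n) (Y := Y) f.1 (n + 1) rfl f.2
  map_add' _ _ := (P.add_extMk _ _ _ _ _ _).symm
  map_smul' r _ := (smul_extMk P r _ _).symm

theorem cocycleToExt_surjective (n : ℕ) : Function.Surjective (cocycleToExt Y P n) := fun α ↦ by
  obtain ⟨f, hf, rfl⟩ := P.extMk_surjective α (n + 1) rfl
  exact ⟨⟨f, hf⟩, rfl⟩

theorem ker_cocycleToExt (n : ℕ) :
    LinearMap.ker (cocycleToExt Y P n) =
      LinearMap.range (homShortComplex Y P n).moduleCatToCycles := by
  ext f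
  refine (extMk_eq_zero_iff_exists_d_comp P f.2).trans (exists_congr fun g ↦ ?_)
  exact ⟨fun h ↦ Subtype.ext h, fun h ↦ congrArg Subtype.val h⟩

theorem nonempty_extModule_linearEquiv (n : ℕ) (X Y : ModuleCat.{u} R) :
    Nonempty (extModule R n X Y ≃ₗ[R] Abelian.Ext.{u} X Y n) := by
  obtain ⟨P⟩ := (inferInstance : HasProjectiveResolution X).out
  have homologyIso := P.isoExt n Y ≪≫
    (P.complex.linearYonedaObj R Y).homologyIsoSc' _ n (n + 1) rfl (by simp) ≪≫
    (homShortComplex Y P n).moduleCatHomologyIso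
  exact ⟨homologyIso.toLinearEquiv.trans ((Submodule.quotEquivOfEq _ _
    (ker_cocycleToExt P n).symm).trans
    ((cocycleToExt Y P n).quotKerEquivOfSurjective (cocycleToExt_surjective P n)))⟩

end Comparison

section Localization

variable {R M A L : Type*} [CommRing R] [CommRing A] [Algebra R A] [AddCommGroup M] [Module R M]
  [AddCommGroup L] [Module R L] [Module A L] [IsScalarTower R A L] (S : Submonoid R)
  [IsLocalization S A] (φ : M →ₗ[R] L) [IsLocalizedModule S φ]

theorem map_mem_localized'_iff {K : Submodule R M} {m : M} :
    φ m ∈ K.localized' A S φ ↔ ∃ s ∈ S, s • m ∈ K := by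
  rw [Submodule.mem_localized']
  constructor
  · rintro ⟨k, hk, s, hks⟩
    rw [IsLocalizedModule.mk'_eq_iff] at hks
    obtain ⟨t, ht⟩ := IsLocalizedModule.exists_of_eq (S := S) (f := φ)
      (hks.trans (map_smul φ (s : R) m).symm)
    refine ⟨t * s, mul_mem t.2 s.2, ?_⟩
    rw [mul_smul]
    exact ht ▸ K.smul_mem _ hk
  · rintro ⟨s, hs, hsm⟩
    exact ⟨s • m, hsm, ⟨s, hs⟩, IsLocalizedModule.mk'_eq_iff.mpr (map_smul φ s m)⟩

theorem localized'_le_localized'_iff {K K' : Submodule R M} :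
    K.localized' A S φ ≤ K'.localized' A S φ ↔ ∀ k ∈ K, ∃ s ∈ S, s • k ∈ K' := by
  simp_rw [Submodule.localized'_eq_span A S φ K, Submodule.span_le, Set.image_subset_iff,
    ← map_mem_localized'_iff (A := A) S φ]
  rfl

theorem torsionBySet_map_le_localized' {I : Ideal R} (hI : I.FG) :
    Submodule.torsionBySet A L (I.map (algebraMap R A) : Set A) ≤
      (Submodule.torsionBySet R M (I : Set R)).localized' A S φ := by
  intro l hl
  obtain ⟨⟨m, s⟩, hms⟩ := IsLocalizedModule.surj S φ l
  have : Module.Finite R I := Module.Finite.iff_fg.mpr hI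
  obtain ⟨t, ht⟩ := Module.Finite.exists_smul_of_comp_eq_of_isLocalizedModule S φ
    (LinearMap.toSpanSingleton R M m ∘ₗ I.subtype) 0 (LinearMap.ext fun a ↦ by
      have hal : (a : R) • l = 0 :=
        (algebraMap_smul A (a : R) l).symm.trans ((Submodule.mem_torsionBySet_iff _ _).mp hl
          ⟨_, Ideal.mem_map_of_mem _ a.2⟩)
      change φ ((a : R) • m) = φ 0
      rw [map_smul, ← hms, smul_comm, hal, smul_zero, map_zero])
  refine (Submodule.mem_localized' ..).mpr ⟨(t : R) • m,
    (Submodule.mem_torsionBySet_iff _ _).mpr fun a ↦ ?_, t * s, ?_⟩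
  · rw [smul_comm]
    exact (LinearMap.congr_fun ht a).trans (smul_zero t)
  · rw [IsLocalizedModule.mk'_eq_iff, mul_smul, hms, map_smul]
    rfl

theorem exists_mem_exists_pow_smul_top_localized'_le [IsArtinian A L] {I : Ideal R} (hI : I.FG) :
    ∃ x ∈ I, ∃ n, (I ^ n • (⊤ : Submodule R M)).localized' A S φ ≤
      (LinearMap.range (LinearMap.lsmul R M x)).localized' A S φ := by
  obtain ⟨z, hz, n, hzn⟩ := exists_mem_exists_pow_smul_top_le_range (L := L)
    (hI.map (algebraMap R A))
  obtain ⟨⟨⟨x, hx⟩, t⟩, hxt⟩ := (IsLocalization.mem_map_algebraMap_iff S A).mp hz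
  refine ⟨x, hx, n, ?_⟩
  rw [Submodule.localized'_smul, Submodule.localized'_top, Ideal.localized'_eq_map, Ideal.map_pow]
  refine hzn.trans ?_
  rintro _ ⟨l, rfl⟩
  have ht : IsUnit (algebraMap R A t) := IsLocalization.map_units A t
  rw [← Submodule.smul_mem_iff_of_isUnit _ ht, LinearMap.lsmul_apply, smul_smul, mul_comm, hxt,
    algebraMap_smul]
  obtain ⟨⟨m, s⟩, rfl⟩ := IsLocalizedModule.mk'_surjective S φ l
  exact (Submodule.mem_localized' ..).mpr
    ⟨x • m, LinearMap.mem_range_self _ m, s, IsLocalizedModule.mk'_smul φ x m s⟩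

end Localization

theorem isArtinian_span_of_subset_torsionBySet {A L : Type*} [CommRing A] [AddCommGroup L]
    [Module A L] {P : Ideal A} [P.IsMaximal] {G : Set L} (hG : G.Finite)
    (hGP : G ⊆ Submodule.torsionBySet A L (P : Set A)) : IsArtinian A (Submodule.span A G) := by
  have : IsSimpleModule A (A ⧸ P) := isSimpleModule_iff_isCoatom.mpr Ideal.IsMaximal.out
  have : Finite G := hG
  have (v : G) : IsArtinian A (Submodule.span A {(v : L)}) := by
    have hP : P ≤ LinearMap.ker (LinearMap.toSpanSingleton A L v) := fun a ha ↦
      (Submodule.mem_torsionBySet_iff _ _).mp (hGP v.2) ⟨a, ha⟩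
    rw [← LinearMap.range_toSpanSingleton, ← Submodule.range_liftQ P _ hP]
    infer_instance
  rw [← Subtype.range_coe (s := G), Submodule.span_range_eq_iSup]
  infer_instance

section Rank

variable {R} [IsNoetherianRing R] {q : Ideal R}

theorem finite_of_linearIndepOn_quotient (hq : (PrimeSpectrum.zeroLocus (q : Set R)).Infinite)
    {V : Type u} [AddCommGroup V] [Module R V] [Module (R ⧸ q) V] [IsScalarTower R (R ⧸ q) V]
    (hV : IsWeaklyLaskerian R V) {F : Set V} (hF : LinearIndepOn (R ⧸ q) id F) : F.Finite := by
  by_contra hinf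
  let e := Set.Infinite.natEmbedding F hinf
  have hli : LinearIndependent (R ⧸ q) fun i ↦ (e i : V) := hF.comp e e.injective
  exact not_isWeaklyLaskerian_finsupp_quotient hq (hV.of_injective
    (g := (Finsupp.linearCombination (R ⧸ q) fun i ↦ (e i : V)).restrictScalars R) hli)

theorem exists_finite_forall_exists_notMem_smul_mem_span [q.IsPrime]
    (hq : (PrimeSpectrum.zeroLocus (q : Set R)).Infinite)
    {V : Type u} [AddCommGroup V] [Module R V] (hqV : Module.IsTorsionBySet R V q)
    (hV : IsWeaklyLaskerian R V) :
    ∃ F : Set V, F.Finite ∧ ∀ v, ∃ s ∉ q, s • v ∈ Submodule.span R F := by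
  let _ := hqV.module
  have : IsScalarTower R (R ⧸ q) V := hqV.isScalarTower
  obtain ⟨F, hF, hmax⟩ := exists_maximal_linearIndepOn (R ⧸ q) (id : V → V)
  refine ⟨F, finite_of_linearIndepOn_quotient hq hV hF, fun v ↦ ?_⟩
  by_cases hv : v ∈ F
  · exact ⟨1, q.one_notMem, by rw [one_smul]; exact Submodule.subset_span hv⟩
  · obtain ⟨a, ha, hav⟩ := hmax v hv
    obtain ⟨s, rfl⟩ := Ideal.Quotient.mk_surjective a
    refine ⟨s, mt Ideal.Quotient.eq_zero_iff_mem.mpr ha, ?_⟩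
    rw [Set.image_id, id] at hav
    rw [← Submodule.restrictScalars_span R (R ⧸ q) Ideal.Quotient.mk_surjective,
      ← algebraMap_smul (R ⧸ q) s v]
    exact hav

variable {M : Type u} {A L : Type*} [CommRing A] [Algebra R A] [AddCommGroup M] [Module R M]
  [AddCommGroup L] [Module R L] [Module A L] [IsScalarTower R A L] (S : Submonoid R)
  [IsLocalization S A] (φ : M →ₗ[R] L) [IsLocalizedModule S φ]

include S φ in
theorem isArtinian_torsionBySet_map [hP : (q.map (algebraMap R A)).IsMaximal]
    (hPq : (q.map (algebraMap R A)).comap (algebraMap R A) = q)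
    (hq : (PrimeSpectrum.zeroLocus (q : Set R)).Infinite)
    (hM : IsWeaklyLaskerian R (Submodule.torsionBySet R M (q : Set R))) :
    IsArtinian A (Submodule.torsionBySet A L (q.map (algebraMap R A) : Set A)) := by
  set P := q.map (algebraMap R A) with hPdef
  let V := Submodule.torsionBySet R M (q : Set R)
  have : q.IsPrime := hPq ▸ hP.isPrime.under R
  have hφ (v : V) : φ v ∈ Submodule.torsionBySet A L (P : Set A) := by
    rw [hPdef, Ideal.map, ← Submodule.torsionBySet_eq_torsionBySet_span,
      Submodule.mem_torsionBySet_iff]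
    rintro ⟨_, a, ha, rfl⟩
    rw [algebraMap_smul, ← map_smul, (Submodule.mem_torsionBySet_iff _ _).mp v.2 ⟨a, ha⟩, map_zero]
  obtain ⟨F, hF, hspan⟩ := exists_finite_forall_exists_notMem_smul_mem_span hq
    (Submodule.torsionBySet_isTorsionBySet (q : Set R)) hM
  let ψ : V →ₗ[R] L := φ ∘ₗ V.subtype
  have hart : IsArtinian A (Submodule.span A (ψ '' F)) :=
    isArtinian_span_of_subset_torsionBySet (P := P) (hF.image ψ)
      (Set.image_subset_iff.mpr fun v _ ↦ hφ v)
  have hle : Submodule.torsionBySet A L (P : Set A) ≤ Submodule.span A (ψ '' F) := by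
    refine (torsionBySet_map_le_localized' S φ (IsNoetherian.noetherian q)).trans ?_
    rw [Submodule.localized'_eq_span, Submodule.span_le]
    rintro _ ⟨v, hv, rfl⟩
    obtain ⟨s, hs, hsv⟩ := hspan ⟨v, hv⟩
    have hsψ : algebraMap R A s • φ v ∈ Submodule.span A (ψ '' F) := by
      rw [algebraMap_smul, ← map_smul]
      exact Submodule.span_le_restrictScalars R A _ (Submodule.map_span ψ F ▸
        Submodule.mem_map_of_mem hsv)
    obtain ⟨c, i, hi, hci⟩ :=
      Ideal.IsMaximal.exists_inv hP (x := algebraMap R A s) fun h ↦ hs (hPq ▸ h)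
    have hiv : i • φ v = 0 := (Submodule.mem_torsionBySet_iff _ _).mp (hφ ⟨v, hv⟩) ⟨i, hi⟩
    rw [SetLike.mem_coe, ← one_smul A (φ v), ← hci, add_smul, hiv, add_zero, mul_smul]
    exact Submodule.smul_mem _ c hsψ
  exact isArtinian_of_le hle

end Rank

section Semilocalization

variable {R} (𝔞 : Ideal R)

/-- The primes `q ⊇ 𝔞` with `V(q)` infinite. A weakly Laskerian `R ⧸ q`-module has finite rank at
such a prime. -/
def infiniteLocusPrimes : Set (PrimeSpectrum R) :=
  {q | 𝔞 ≤ q.asIdeal ∧ (PrimeSpectrum.zeroLocus (q.asIdeal : Set R)).Infinite}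

/-- The complement of the union of the primes in `infiniteLocusPrimes 𝔞`, at which modules supported
in `V(𝔞)` are localized. It is all of `R` when there are no such primes. -/
def semilocalSubmonoid : Submonoid R :=
  ⨅ q ∈ infiniteLocusPrimes 𝔞, q.asIdeal.primeCompl

variable {𝔞}

theorem mem_semilocalSubmonoid {s : R} :
    s ∈ semilocalSubmonoid 𝔞 ↔ ∀ q ∈ infiniteLocusPrimes 𝔞, s ∉ q.asIdeal := by
  simp only [semilocalSubmonoid, Submonoid.mem_iInf, Ideal.mem_primeCompl_iff]

theorem exists_pow_smul_eq_zero_of_support_subset {M : Type*} [AddCommGroup M] [Module R M]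
    (hM : Module.support R M ⊆ PrimeSpectrum.zeroLocus (𝔞 : Set R)) {x : R} (hx : x ∈ 𝔞) (m : M) :
    ∃ n, x ^ n • m = 0 := by
  have hx' : x ∈ (Submodule.span R {m}).annihilator.radical := by
    rw [Ideal.radical_eq_sInf, Ideal.mem_sInf]
    rintro p ⟨hp, hprime⟩
    exact hM (Module.mem_support_iff_exists_annihilator (p := ⟨p, hprime⟩).mpr ⟨m, hp⟩) hx
  exact hx'.imp fun n ↦ (Submodule.mem_annihilator_span_singleton m (x ^ n)).mp

theorem exists_pow_smul_eq_zero_of_mem_map {A M L : Type*} [CommRing A] [Algebra R A]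
    [AddCommGroup M] [Module R M] [AddCommGroup L] [Module R L] [Module A L] [IsScalarTower R A L]
    (S : Submonoid R) [IsLocalization S A] (φ : M →ₗ[R] L) [IsLocalizedModule S φ]
    (hM : Module.support R M ⊆ PrimeSpectrum.zeroLocus (𝔞 : Set R)) {z : A}
    (hz : z ∈ 𝔞.map (algebraMap R A)) (l : L) : ∃ n, z ^ n • l = 0 := by
  obtain ⟨⟨⟨x, hx⟩, t⟩, hxt⟩ := (IsLocalization.mem_map_algebraMap_iff S A).mp hz
  obtain ⟨⟨m, s⟩, rfl⟩ := IsLocalizedModule.mk'_surjective S φ l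
  obtain ⟨n, hn⟩ := exists_pow_smul_eq_zero_of_support_subset hM hx m
  have ht : IsUnit (algebraMap R A t ^ n) := (IsLocalization.map_units A t).pow n
  refine ⟨n, ht.smul_eq_zero.mp ?_⟩
  rw [smul_smul, ← mul_pow, mul_comm, hxt, ← map_pow, algebraMap_smul, Function.uncurry_apply_pair,
    ← IsLocalizedModule.mk'_smul, hn, IsLocalizedModule.mk'_zero]

variable [IsNoetherianRing R] (h𝔞 : ∀ q ∈ infiniteLocusPrimes 𝔞, q.asIdeal ∈ 𝔞.minimalPrimes)

include h𝔞

theorem mem_infiniteLocusPrimes_of_disjoint {p : PrimeSpectrum R} (hp : 𝔞 ≤ p.asIdeal)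
    (hdisj : Disjoint (semilocalSubmonoid 𝔞 : Set R) p.asIdeal) : p ∈ infiniteLocusPrimes 𝔞 := by
  by_contra hmem
  have hfin : (infiniteLocusPrimes 𝔞).Finite :=
    ((Ideal.finite_minimalPrimes_of_isNoetherianRing R 𝔞).preimage
      fun _ _ _ _ ↦ PrimeSpectrum.ext).subset h𝔞
  have hle (q) (hq : q ∈ infiniteLocusPrimes 𝔞) : ¬ p.asIdeal ≤ q.asIdeal := fun hpq ↦
    hmem (PrimeSpectrum.ext (hpq.antisymm ((h𝔞 q hq).2 ⟨p.2, hp⟩ hpq)) ▸ hq)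
  obtain ⟨x, hxp, hx⟩ := exists_mem_forall_notMem_of_forall_not_le hfin (fun q _ ↦ q.2) hle
  exact Set.disjoint_left.mp hdisj (mem_semilocalSubmonoid.mpr hx) hxp

variable {A : Type*} [CommRing A] [Algebra R A] [IsLocalization (semilocalSubmonoid 𝔞) A]

theorem comap_mem_infiniteLocusPrimes {P : PrimeSpectrum A}
    (hP : 𝔞.map (algebraMap R A) ≤ P.asIdeal) :
    PrimeSpectrum.comap (algebraMap R A) P ∈ infiniteLocusPrimes 𝔞 :=
  mem_infiniteLocusPrimes_of_disjoint h𝔞 (Ideal.map_le_iff_le_comap.mp hP)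
    ((IsLocalization.disjoint_under_iff (semilocalSubmonoid 𝔞) A P.asIdeal).mpr P.2.ne_top)

theorem isMaximal_of_map_le {P : Ideal A} [P.IsPrime]
    (hP : 𝔞.map (algebraMap R A) ≤ P) : P.IsMaximal := by
  obtain ⟨Q, hQ, hPQ⟩ := P.exists_le_maximal Ideal.IsPrime.ne_top'
  have hmin := h𝔞 _ (comap_mem_infiniteLocusPrimes h𝔞 (P := ⟨Q, hQ.isPrime⟩) (hP.trans hPQ))
  have hQP : Q.comap (algebraMap R A) ≤ P.comap (algebraMap R A) :=
    hmin.2 ⟨inferInstance, Ideal.map_le_iff_le_comap.mp hP⟩ (Ideal.comap_mono hPQ)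
  rwa [hPQ.antisymm ((IsLocalization.orderEmbedding (semilocalSubmonoid 𝔞) A).le_iff_le.mp hQP)]

variable {M : Type u} {L : Type*} [AddCommGroup M] [Module R M] [AddCommGroup L] [Module R L]
  [Module A L] [IsScalarTower R A L] (φ : M →ₗ[R] L)
  [IsLocalizedModule (semilocalSubmonoid 𝔞) φ]

include φ in
theorem isArtinian_of_isLocalizedModule_semilocalSubmonoid
    (hsupp : Module.support R M ⊆ PrimeSpectrum.zeroLocus (𝔞 : Set R))
    (hM : IsWeaklyLaskerian R (Submodule.torsionBySet R M (𝔞 : Set R))) : IsArtinian A L := by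
  have : IsNoetherianRing A :=
    IsLocalization.isNoetherianRing (semilocalSubmonoid 𝔞) A inferInstance
  have : IsArtinian A (Submodule.torsionBySet A L (𝔞.map (algebraMap R A) : Set A)) := by
    refine isArtinian_torsionBySet_of_forall_isPrime _ fun P hP hle ↦ ?_
    have hq := comap_mem_infiniteLocusPrimes h𝔞 (P := ⟨P, hP⟩) hle
    have hmap : (P.comap (algebraMap R A)).map (algebraMap R A) = P :=
      IsLocalization.map_under (semilocalSubmonoid 𝔞) A P
    have hmax : ((P.comap (algebraMap R A)).map (algebraMap R A)).IsMaximal :=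
      hmap.symm ▸ isMaximal_of_map_le h𝔞 hle
    have hVq := hM.of_injective (Submodule.inclusion_injective
      (Submodule.torsionBySet_le_torsionBySet_of_subset (M := M) (R := R) hq.1))
    exact hmap ▸ isArtinian_torsionBySet_map (semilocalSubmonoid 𝔞) φ (congrArg _ hmap) hq.2 hVq
  exact isArtinian_of_isArtinian_torsionBySet_of_fg (IsNoetherian.noetherian _)
    fun z hz ↦ exists_pow_smul_eq_zero_of_mem_map (semilocalSubmonoid 𝔞) φ hsupp hz

end Semilocalization

section FiniteSupport

variable {R} [IsNoetherianRing R]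

theorem finite_support_of_finite_associatedPrimes {B : Type*} [AddCommGroup B] [Module R B]
    (hB : (associatedPrimes R B).Finite)
    (hV : ∀ p ∈ associatedPrimes R B, (PrimeSpectrum.zeroLocus (p : Set R)).Finite) :
    (Module.support R B).Finite := by
  refine (hB.biUnion hV).subset fun P hP ↦ ?_
  obtain ⟨b, hb⟩ := Module.mem_support_iff_exists_annihilator.mp hP
  obtain ⟨p, hp, hpP⟩ := Ideal.exists_minimalPrimes_le hb
  have hpB : p ∈ associatedPrimes R B :=
    associatedPrimes.subset_of_injective (Submodule.span R {b}).injective_subtype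
      (Module.associatedPrimes.minimalPrimes_annihilator_subset_associatedPrimes R _ hp)
  exact Set.mem_biUnion hpB hpP

theorem mem_associatedPrimes_torsionBySet {B : Type*} [AddCommGroup B] [Module R B]
    {p I : Ideal R} (hI : I ≤ p) (hp : p ∈ associatedPrimes R B) :
    p ∈ associatedPrimes R (Submodule.torsionBySet R B (I : Set R)) := by
  obtain ⟨hprime, x, hx⟩ := isAssociatedPrime_iff.mp hp
  have hmem (r : R) : r ∈ p ↔ r • x = 0 := by
    rw [hx, Submodule.mem_colon_singleton, Submodule.mem_bot]
  refine isAssociatedPrime_iff.mpr ⟨hprime, ⟨x, ?_⟩, ?_⟩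
  · exact (Submodule.mem_torsionBySet_iff _ _).mpr fun a ↦ (hmem a).mp (hI a.2)
  · ext r
    rw [hmem, Submodule.mem_colon_singleton, Submodule.mem_bot, Subtype.ext_iff]
    rfl

theorem finite_support_of_forall_exists_smul_eq_zero {𝔞 : Ideal R} {B : Type u} [AddCommGroup B]
    [Module R B] (hsupp : Module.support R B ⊆ PrimeSpectrum.zeroLocus (𝔞 : Set R))
    (h₀ : IsWeaklyLaskerian R (Submodule.torsionBySet R B (𝔞 : Set R)))
    (hB : ∀ b : B, ∃ s ∈ semilocalSubmonoid 𝔞, s • b = 0) : (Module.support R B).Finite := by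
  have hle (p) (hp : p ∈ associatedPrimes R B) : 𝔞 ≤ p :=
    hsupp (mk_mem_support_of_mem_associatedPrimes hp)
  refine finite_support_of_finite_associatedPrimes (h₀.finite_associatedPrimes.subset fun p hp ↦
    mem_associatedPrimes_torsionBySet (hle p hp) hp) fun p hp ↦ ?_
  by_contra hinf
  obtain ⟨hprime, b, rfl⟩ := isAssociatedPrime_iff.mp hp
  obtain ⟨s, hs, hsb⟩ := hB b
  exact mem_semilocalSubmonoid.mp hs ⟨_, hprime⟩ ⟨hle _ hp, hinf⟩
    (Submodule.mem_colon_singleton.mpr hsb)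

end FiniteSupport

namespace IsWeaklyLaskerian

variable {R} [IsNoetherianRing R] {𝔞 : Ideal R} {B : Type u} [AddCommGroup B] [Module R B]

theorem torsionBySet_pow (h : IsWeaklyLaskerian R (Submodule.torsionBySet R B (𝔞 : Set R)))
    (n : ℕ) : IsWeaklyLaskerian R (Submodule.torsionBySet R B ((𝔞 ^ n : Ideal R) : Set R)) := by
  induction n with
  | zero =>
    rw [pow_zero, Ideal.one_eq_top, Submodule.top_coe, Submodule.torsionBySet_univ]
    exact of_subsingleton
  | succ n ih =>
    rw [pow_succ]
    obtain ⟨k, f, g, hfg⟩ := torsionBySet_mul_exact (𝔞 ^ n) (IsNoetherian.noetherian 𝔞) (L := B)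
    exact of_ker_le_range hfg.ge h (ih.pi_fin k)

theorem of_torsionBySet_quotient_pow_smul {n : ℕ}
    (h : IsWeaklyLaskerian R
      (Submodule.torsionBySet R (B ⧸ (𝔞 ^ n • ⊤ : Submodule R B)) (𝔞 : Set R))) :
    IsWeaklyLaskerian R (B ⧸ (𝔞 ^ n • ⊤ : Submodule R B)) := by
  have htop : Submodule.torsionBySet R (B ⧸ (𝔞 ^ n • ⊤ : Submodule R B))
      ((𝔞 ^ n : Ideal R) : Set R) = ⊤ := by
    refine eq_top_iff.mpr fun y _ ↦ (Submodule.mem_torsionBySet_iff _ _).mpr fun a ↦ ?_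
    obtain ⟨b, rfl⟩ := Submodule.mkQ_surjective _ y
    rw [← map_smul, Submodule.mkQ_apply, Submodule.Quotient.mk_eq_zero]
    exact Submodule.smul_mem_smul a.2 trivial
  exact (congr (Submodule.topEquiv.symm ≪≫ₗ LinearEquiv.ofEq _ _ htop.symm)).mpr
    (h.torsionBySet_pow n)

theorem derivedExt_of_pow_smul (hsupp : Module.support R B ⊆ PrimeSpectrum.zeroLocus (𝔞 : Set R))
    (h₀ : IsWeaklyLaskerian R (DerivedExt R (R ⧸ 𝔞) B 0)) {n : ℕ}
    (hn : ∀ b ∈ 𝔞 ^ n • (⊤ : Submodule R B), ∃ s ∈ semilocalSubmonoid 𝔞, s • b = 0) (i : ℕ) :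
    IsWeaklyLaskerian R (DerivedExt R (R ⧸ 𝔞) B i) := by
  set B' : Submodule R B := 𝔞 ^ n • ⊤
  have hB' : IsWeaklyLaskerian R B' := by
    have h₀' := h₀.of_injective (extMap_zero_injective (R ⧸ 𝔞) B'.injective_subtype)
    refine of_finite_support (finite_support_of_forall_exists_smul_eq_zero
      ((Module.support_subset_of_injective _ B'.injective_subtype).trans hsupp)
      ((congr (derivedExtZeroQuotientEquiv 𝔞)).mp h₀') fun b ↦ ?_)
    exact (hn b b.2).imp fun s hs ↦ ⟨hs.1, Subtype.ext hs.2⟩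
  have hquot : IsWeaklyLaskerian R (B ⧸ B') :=
    of_torsionBySet_quotient_pow_smul ((congr (derivedExtZeroQuotientEquiv 𝔞)).mp
      (derivedExt_right B'.injective_subtype (LinearMap.exact_subtype_mkQ B') B'.mkQ_surjective h₀
        (hB'.derivedExt (R ⧸ 𝔞) 1)))
  exact derivedExt_middle B'.injective_subtype (LinearMap.exact_subtype_mkQ B') B'.mkQ_surjective
    (hB'.derivedExt _ i) (hquot.derivedExt _ i)

theorem derivedExt_quotient_range_of_pow_smul
    (hsupp : Module.support R B ⊆ PrimeSpectrum.zeroLocus (𝔞 : Set R)) {x : R} {n : ℕ}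
    (hn : ∀ b ∈ 𝔞 ^ n • (⊤ : Submodule R B), ∃ s ∈ semilocalSubmonoid 𝔞,
      s • b ∈ LinearMap.range (LinearMap.lsmul R B x))
    (h₀ : IsWeaklyLaskerian R
      (DerivedExt R (R ⧸ 𝔞) (B ⧸ LinearMap.range (LinearMap.lsmul R B x)) 0)) (i : ℕ) :
    IsWeaklyLaskerian R
      (DerivedExt R (R ⧸ 𝔞) (B ⧸ LinearMap.range (LinearMap.lsmul R B x)) i) := by
  set T := LinearMap.range (LinearMap.lsmul R B x)
  have hsuppQ := (Module.support_subset_of_surjective T.mkQ T.mkQ_surjective).trans hsupp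
  refine derivedExt_of_pow_smul hsuppQ h₀ (n := n) (fun y hy ↦ ?_) i
  rw [← T.range_mkQ, LinearMap.range_eq_map, ← Submodule.map_smul''] at hy
  obtain ⟨b, hb, rfl⟩ := hy
  obtain ⟨s, hs, hsb⟩ := hn b hb
  exact ⟨s, hs, (Submodule.Quotient.mk_eq_zero T).mpr hsb⟩

variable {A : Type*} [CommRing A] [Algebra R A] [IsLocalization (semilocalSubmonoid 𝔞) A]
  {M : Type u} [AddCommGroup M] [Module R M] {L : Type*} [AddCommGroup L] [Module R L] [Module A L]
  [IsScalarTower R A L] [IsArtinian A L] (φ : M →ₗ[R] L)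
  [IsLocalizedModule (semilocalSubmonoid 𝔞) φ]

include A φ in
theorem derivedExt_submodule_of_isArtinian
    (hsupp : Module.support R M ⊆ PrimeSpectrum.zeroLocus (𝔞 : Set R)) (K : Submodule R M)
    (h₀ : IsWeaklyLaskerian R (DerivedExt R (R ⧸ 𝔞) K 0))
    (h₁ : IsWeaklyLaskerian R (DerivedExt R (R ⧸ 𝔞) K 1)) (i : ℕ) :
    IsWeaklyLaskerian R (DerivedExt R (R ⧸ 𝔞) K i) := by
  induction hK : K.localized' A (semilocalSubmonoid 𝔞) φ using WellFoundedLT.induction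
    generalizing K i with
  | ind _ ih =>
  subst hK
  have hsuppK := (Module.support_subset_of_injective _ K.injective_subtype).trans hsupp
  obtain ⟨x, hx, n, hn⟩ := exists_mem_exists_pow_smul_top_localized'_le (A := A)
    (semilocalSubmonoid 𝔞) (K.toLocalized' A (semilocalSubmonoid 𝔞) φ) (IsNoetherian.noetherian 𝔞)
  rw [localized'_le_localized'_iff] at hn
  let K' := K ⊓ LinearMap.ker (LinearMap.lsmul R M x)
  let ι : K' →ₗ[R] K := Submodule.inclusion inf_le_left
  have hι : Function.Injective ι := Submodule.inclusion_injective _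
  have hιx : Function.Exact ι (LinearMap.lsmul R K x) := fun k ↦
    ⟨fun hk ↦ ⟨⟨k, k.2, congrArg Subtype.val hk⟩, rfl⟩,
      fun ⟨k', hk'⟩ ↦ hk' ▸ Subtype.ext k'.2.2⟩
  by_cases hle : K.localized' A (semilocalSubmonoid 𝔞) φ ≤ K'.localized' A (semilocalSubmonoid 𝔞) φ
  · have hxK := (localized'_le_localized'_iff _ φ).mp hle
    refine derivedExt_of_pow_smul hsuppK h₀ (n := n) (fun k hk ↦ ?_) i
    obtain ⟨s, hs, k', hk'⟩ := hn k hk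
    obtain ⟨t, ht, htk⟩ := hxK k' k'.2
    refine ⟨t * s, mul_mem ht hs, Subtype.ext ?_⟩
    rw [mul_smul, ← hk']
    exact (smul_comm t x (k' : M)).trans htk.2
  · have hlt : K'.localized' A (semilocalSubmonoid 𝔞) φ < K.localized' A (semilocalSubmonoid 𝔞) φ :=
      lt_of_le_not_ge ((localized'_le_localized'_iff _ φ).mpr fun k hk ↦
        ⟨1, one_mem _, by rw [one_smul]; exact hk.1⟩) hle
    obtain ⟨h₀', h₁'⟩ := derivedExt_zero_one_of_exact hι hιx h₀ h₁ h₀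
    have hK' (j) : IsWeaklyLaskerian R (DerivedExt R (R ⧸ 𝔞) K' j) := ih _ hlt K' h₀' h₁' j rfl
    have hquot := derivedExt_quotient_range_of_pow_smul hsuppK hn
      (derivedExt_quotient_range_of_exact hι hιx (hK' 2) h₁ h₀)
    exact derivedExt_of_exact_lsmul (by rwa [Ideal.annihilator_quotient]) hι hιx hK' hquot i

end IsWeaklyLaskerian

section WeaklyCofinite

variable {R} {𝔞 : Ideal R}

theorem isWeaklyCofinite_iff {B : Type u} [AddCommGroup B] [Module R B] :
    IsWeaklyCofinite R 𝔞 (ModuleCat.of R B) ↔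
      Module.support R B ⊆ PrimeSpectrum.zeroLocus (𝔞 : Set R) ∧
        ∀ i, IsWeaklyLaskerian R (DerivedExt R (R ⧸ 𝔞) B i) :=
  and_congr_right fun _ ↦ forall_congr' fun i ↦ IsWeaklyLaskerian.congr
    (nonempty_extModule_linearEquiv i (ModuleCat.of R (R ⧸ 𝔞)) (ModuleCat.of R B)).some

theorem isWeaklyCofinite_of_derivedExt_zero_one [IsNoetherianRing R]
    (h𝔞 : ∀ q ∈ infiniteLocusPrimes 𝔞, q.asIdeal ∈ 𝔞.minimalPrimes)
    {B : Type u} [AddCommGroup B] [Module R B]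
    (hsupp : Module.support R B ⊆ PrimeSpectrum.zeroLocus (𝔞 : Set R))
    (h₀ : IsWeaklyLaskerian R (DerivedExt R (R ⧸ 𝔞) B 0))
    (h₁ : IsWeaklyLaskerian R (DerivedExt R (R ⧸ 𝔞) B 1)) :
    IsWeaklyCofinite R 𝔞 (ModuleCat.of R B) := by
  let φ := LocalizedModule.mkLinearMap (semilocalSubmonoid 𝔞) B
  have : IsArtinian (Localization (semilocalSubmonoid 𝔞))
      (LocalizedModule (semilocalSubmonoid 𝔞) B) :=
    isArtinian_of_isLocalizedModule_semilocalSubmonoid h𝔞 φ hsupp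
      ((IsWeaklyLaskerian.congr (derivedExtZeroQuotientEquiv 𝔞)).mp h₀)
  let e : (⊤ : Submodule R B) ≃ₗ[R] B := Submodule.topEquiv
  exact isWeaklyCofinite_iff.mpr ⟨hsupp, fun i ↦ .derivedExt_of_linearEquiv e <|
    .derivedExt_submodule_of_isArtinian (A := Localization (semilocalSubmonoid 𝔞)) φ hsupp ⊤
      (.derivedExt_of_linearEquiv e.symm h₀) (.derivedExt_of_linearEquiv e.symm h₁) i⟩

theorem mem_minimalPrimes_of_mem_infiniteLocusPrimes [Ring.KrullDimLE 1 (R ⧸ 𝔞)]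
    {q : PrimeSpectrum R} (hq : q ∈ infiniteLocusPrimes 𝔞) : q.asIdeal ∈ 𝔞.minimalPrimes := by
  have hprime : (q.asIdeal.map (Ideal.Quotient.mk 𝔞)).IsPrime :=
    Ideal.map_isPrime_of_surjective Ideal.Quotient.mk_surjective (Ideal.mk_ker.trans_le hq.1)
  have hcomap : (q.asIdeal.map (Ideal.Quotient.mk 𝔞)).comap (Ideal.Quotient.mk 𝔞) = q.asIdeal := by
    rw [Ideal.comap_map_mk hq.1]
  rcases Ring.krullDimLE_one_iff.mp ‹_› _ hprime with hmin | hmax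
  · rw [Ideal.minimalPrimes_eq_comap]
    exact ⟨_, hmin, hcomap⟩
  · have hqmax : q.asIdeal.IsMaximal :=
      hcomap ▸ Ideal.comap_isMaximal_of_surjective _ Ideal.Quotient.mk_surjective
    refine absurd (Set.Subsingleton.finite fun p hp p' hp' ↦ PrimeSpectrum.ext ?_) hq.2
    exact (hqmax.eq_of_le p.2.ne_top hp).symm.trans (hqmax.eq_of_le p'.2.ne_top hp')

end WeaklyCofinite

theorem stmt16_general [IsNoetherianRing R] (𝔞 : Ideal R)
    (h𝔞 : ∀ q ∈ infiniteLocusPrimes 𝔞, q.asIdeal ∈ 𝔞.minimalPrimes)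
    (M N : Type u) [AddCommGroup M] [Module R M] [AddCommGroup N] [Module R N]
    (hM : IsWeaklyCofinite R 𝔞 (ModuleCat.of R M))
    (hN : IsWeaklyCofinite R 𝔞 (ModuleCat.of R N))
    (f : M →ₗ[R] N) :
    IsWeaklyCofinite R 𝔞 (ModuleCat.of R (LinearMap.ker f)) ∧
      IsWeaklyCofinite R 𝔞 (ModuleCat.of R (N ⧸ LinearMap.range f)) := by
  obtain ⟨hMsupp, hMext⟩ := isWeaklyCofinite_iff.mp hM
  obtain ⟨hNsupp, hNext⟩ := isWeaklyCofinite_iff.mp hN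
  have hinj := (LinearMap.ker f).injective_subtype
  have hexact : Function.Exact (LinearMap.ker f).subtype f := LinearMap.exact_subtype_ker_map f
  obtain ⟨hK₀, hK₁⟩ :=
    IsWeaklyLaskerian.derivedExt_zero_one_of_exact hinj hexact (hMext 0) (hMext 1) (hNext 0)
  have hK : IsWeaklyCofinite R 𝔞 (ModuleCat.of R (LinearMap.ker f)) :=
    isWeaklyCofinite_of_derivedExt_zero_one h𝔞
      ((Module.support_subset_of_injective _ hinj).trans hMsupp) hK₀ hK₁
  refine ⟨hK, isWeaklyCofinite_iff.mpr ⟨?_, fun i ↦ ?_⟩⟩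
  · exact (Module.support_subset_of_surjective _ (LinearMap.range f).mkQ_surjective).trans hNsupp
  · exact IsWeaklyLaskerian.derivedExt_quotient_range_of_exact hinj hexact
      ((isWeaklyCofinite_iff.mp hK).2 (i + 2)) (hMext (i + 1)) (hNext i)

theorem stmt16 [IsNoetherianRing R] (𝔞 : Ideal R) (hdim : ringKrullDim (R ⧸ 𝔞) = 1)
    (M N : Type u) [AddCommGroup M] [Module R M] [AddCommGroup N] [Module R N]
    (hM : IsWeaklyCofinite R 𝔞 (ModuleCat.of R M))
    (hN : IsWeaklyCofinite R 𝔞 (ModuleCat.of R N))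
    (f : M →ₗ[R] N) :
    IsWeaklyCofinite R 𝔞 (ModuleCat.of R (LinearMap.ker f)) ∧
      IsWeaklyCofinite R 𝔞 (ModuleCat.of R (N ⧸ LinearMap.range f)) :=
  have : Ring.KrullDimLE 1 (R ⧸ 𝔞) := Ring.krullDimLE_iff.mpr hdim.le
  stmt16_general R 𝔞 (fun _ ↦ mem_minimalPrimes_of_mem_infiniteLocusPrimes) M N hM hN f
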